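/- Let U ⊆ ℝⁿ be open with coordinates x = (x¹,…,xⁿ), let g₁,…,gₙ, K₁,…,Kₙ : U → ℝ be smooth, and let ε₁,…,εₙ ∈ {−1,1}. Define H(x,p) = (1/2)·Σᵢ εᵢ·exp(gᵢ(x))·pᵢ² and F(x,p) = Σᵢ εᵢ·exp(gᵢ(x))·Kᵢ(x)·pᵢ². Suppose that for all i: (∂Kᵢ/∂xⁱ)(x) = 0 on U, and that for all i ≠ j and all x ∈ U: (Kᵢ(x) − Kⱼ(x))·(∂gᵢ/∂xʲ)(x) + (∂Kᵢ/∂xʲ)(x) = 0. Then {H,F}(x,p) = 0 for all (x,p) ∈ U × ℝⁿ. -/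

import Mathlib

open scoped BigOperators

/-- Partial derivative of `f : ℝⁿ → ℝ` in the `j`-th coordinate direction. -/
noncomputable def pd {n : ℕ} (f : (Fin n → ℝ) → ℝ) (j : Fin n) (x : Fin n → ℝ) : ℝ :=
  fderiv ℝ f x (Pi.single j 1)

/-- The canonical Poisson bracket of two functions on `ℝⁿ × ℝⁿ` (positions `x`, momenta `p`):
`{H,F} = Σ_s (∂H/∂p_s · ∂F/∂x^s − ∂H/∂x^s · ∂F/∂p_s)`. -/
noncomputable def poisson {n : ℕ} (H F : ((Fin n → ℝ) × (Fin n → ℝ)) → ℝ)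
    (q : (Fin n → ℝ) × (Fin n → ℝ)) : ℝ :=
  ∑ s : Fin n,
    (fderiv ℝ H q ((0 : Fin n → ℝ), Pi.single s 1) * fderiv ℝ F q (Pi.single s 1, (0 : Fin n → ℝ))
      - fderiv ℝ H q (Pi.single s 1, (0 : Fin n → ℝ)) *
          fderiv ℝ F q ((0 : Fin n → ℝ), Pi.single s 1))

/-!
For diagonal quadratic forms `A = ∑ aᵢ(x) pᵢ²` and `B = ∑ bᵢ(x) pᵢ²`, the bracket `{A,B}` is the
cubic `2 ∑ₛ ∑ᵢ (aₛ ∂ₛbᵢ - bₛ ∂ₛaᵢ) pₛ pᵢ²`. When `bᵢ = aᵢ Kᵢ` its coefficients are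
`aₛ ((Kᵢ - Kₛ) ∂ₛaᵢ + aᵢ ∂ₛKᵢ)`, and when `aᵢ = εᵢ exp gᵢ` they become
`aₛ aᵢ ((Kᵢ - Kₛ) ∂ₛgᵢ + ∂ₛKᵢ)`.
-/

section DiagonalQuadratic

variable {𝕜 E ι : Type*} [Fintype ι]

/-- The function `(x, p) ↦ ∑ i, a i x * p i ^ 2`, a diagonal quadratic form in `p` at each `x`:
twice the kinetic energy of an orthogonal metric whose inverse has diagonal components `a i`. -/
def diagonalQuadratic [CommSemiring 𝕜] (a : ι → E → 𝕜) (q : E × (ι → 𝕜)) : 𝕜 :=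
  ∑ i, a i q.1 * q.2 i ^ 2

theorem fderiv_diagonalQuadratic_apply [NontriviallyNormedField 𝕜] [NormedAddCommGroup E]
    [NormedSpace 𝕜 E] {a : ι → E → 𝕜} {x : E} (ha : ∀ i, DifferentiableAt 𝕜 (a i) x)
    (p : ι → 𝕜) (v : E) (w : ι → 𝕜) :
    fderiv 𝕜 (diagonalQuadratic a) (x, p) (v, w) =
      ∑ i, (fderiv 𝕜 (a i) x v * p i ^ 2 + 2 * a i x * p i * w i) := by
  have hasFDerivAt_coeff (i : ι) : HasFDerivAt (fun q : E × (ι → 𝕜) => a i q.1) _ (x, p) :=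
    (ha i).hasFDerivAt.comp (x, p) hasFDerivAt_fst
  have hasFDerivAt_momentum (i : ι) : HasFDerivAt (fun q : E × (ι → 𝕜) => q.2 i) _ (x, p) :=
    (ContinuousLinearMap.proj (φ := fun _ => 𝕜) i ∘L .snd 𝕜 E (ι → 𝕜)).hasFDerivAt
  have hasFDerivAt_sum : HasFDerivAt (diagonalQuadratic a) _ (x, p) :=
    HasFDerivAt.fun_sum fun i _ => (hasFDerivAt_coeff i).mul ((hasFDerivAt_momentum i).pow 2)
  rw [hasFDerivAt_sum.fderiv, sum_apply]
  refine Finset.sum_congr rfl fun i _ => ?_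
  simp only [Nat.add_one_sub_one, pow_one, nsmul_eq_mul, Nat.cast_ofNat, add_apply, smul_apply,
    ContinuousLinearMap.comp_apply, ContinuousLinearMap.coe_snd', ContinuousLinearMap.proj_apply,
    smul_eq_mul, ContinuousLinearMap.coe_fst']
  ring

end DiagonalQuadratic

section PoissonBracket

variable {n : ℕ}

theorem pd_mul {f g : (Fin n → ℝ) → ℝ} {x : Fin n → ℝ} (hf : DifferentiableAt ℝ f x)
    (hg : DifferentiableAt ℝ g x) (j : Fin n) :
    pd (fun y => f y * g y) j x = f x * pd g j x + g x * pd f j x := by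
  simp [pd, fderiv_fun_mul hf hg]

theorem pd_const_mul_exp {f : (Fin n → ℝ) → ℝ} {x : Fin n → ℝ} (hf : DifferentiableAt ℝ f x)
    (c : ℝ) (j : Fin n) :
    pd (fun y => c * Real.exp (f y)) j x = c * Real.exp (f x) * pd f j x := by
  simp [pd, (hf.hasFDerivAt.exp.const_mul c).fderiv, mul_assoc]

theorem poisson_const_mul_left (c : ℝ) (H F : (Fin n → ℝ) × (Fin n → ℝ) → ℝ)
    (q : (Fin n → ℝ) × (Fin n → ℝ)) :
    poisson (fun q => c * H q) F q = c * poisson H F q := by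
  have fderiv_const_mul : fderiv ℝ (fun q => c * H q) q = c • fderiv ℝ H q :=
    congr_fun (fderiv_const_smul_field c) q
  simp only [poisson, fderiv_const_mul, smul_apply, smul_eq_mul, Finset.mul_sum, mul_sub, mul_assoc]

theorem poisson_diagonalQuadratic {a b : Fin n → (Fin n → ℝ) → ℝ} {x : Fin n → ℝ}
    (ha : ∀ i, DifferentiableAt ℝ (a i) x) (hb : ∀ i, DifferentiableAt ℝ (b i) x)
    (p : Fin n → ℝ) :
    poisson (diagonalQuadratic a) (diagonalQuadratic b) (x, p) =
      2 * ∑ s, ∑ i, (a s x * pd (b i) s x - b s x * pd (a i) s x) * (p s * p i ^ 2) := by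
  have momentum_deriv {c : Fin n → (Fin n → ℝ) → ℝ} (hc : ∀ i, DifferentiableAt ℝ (c i) x)
      (s : Fin n) :
      fderiv ℝ (diagonalQuadratic c) (x, p) (0, Pi.single s 1) = 2 * c s x * p s := by
    simp [fderiv_diagonalQuadratic_apply hc, Pi.single_apply]
  have position_deriv {c : Fin n → (Fin n → ℝ) → ℝ} (hc : ∀ i, DifferentiableAt ℝ (c i) x)
      (s : Fin n) :
      fderiv ℝ (diagonalQuadratic c) (x, p) (Pi.single s 1, 0) = ∑ i, pd (c i) s x * p i ^ 2 := by
    simp [fderiv_diagonalQuadratic_apply hc, pd]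
  simp only [poisson, momentum_deriv ha, momentum_deriv hb, position_deriv ha, position_deriv hb,
    Finset.mul_sum, Finset.sum_mul, ← Finset.sum_sub_distrib]
  refine Finset.sum_congr rfl fun s _ => Finset.sum_congr rfl fun i _ => ?_
  ring

theorem poisson_diagonalQuadratic_mul_eq_zero {a K : Fin n → (Fin n → ℝ) → ℝ} {x : Fin n → ℝ}
    (ha : ∀ i, DifferentiableAt ℝ (a i) x) (hK : ∀ i, DifferentiableAt ℝ (K i) x)
    (h : ∀ i s, (K i x - K s x) * pd (a i) s x + a i x * pd (K i) s x = 0) (p : Fin n → ℝ) :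
    poisson (diagonalQuadratic a) (diagonalQuadratic fun i y => a i y * K i y) (x, p) = 0 := by
  have coeff_eq_zero (s i : Fin n) :
      a s x * pd (fun y => a i y * K i y) s x - a s x * K s x * pd (a i) s x = 0 := by
    rw [pd_mul (ha i) (hK i)]
    linear_combination a s x * h i s
  simp only [poisson_diagonalQuadratic ha fun i => (ha i).fun_mul (hK i), coeff_eq_zero, zero_mul,
    Finset.sum_const_zero, mul_zero]

theorem poisson_commute_of_conditions_general {g K : Fin n → (Fin n → ℝ) → ℝ} {x : Fin n → ℝ}
    (hg : ∀ i, DifferentiableAt ℝ (g i) x) (hK : ∀ i, DifferentiableAt ℝ (K i) x)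
    (ε : Fin n → ℝ) (hwnl : ∀ i, pd (K i) i x = 0)
    (hmetric : ∀ i j, i ≠ j → (K i x - K j x) * pd (g i) j x + pd (K i) j x = 0)
    (p : Fin n → ℝ) :
    poisson
      (fun q => (1 / 2 : ℝ) * ∑ i, ε i * Real.exp (g i q.1) * (q.2 i) ^ 2)
      (fun q => ∑ i, ε i * Real.exp (g i q.1) * K i q.1 * (q.2 i) ^ 2) (x, p) = 0 := by
  let a (i : Fin n) (y : Fin n → ℝ) : ℝ := ε i * Real.exp (g i y)
  have ha (i : Fin n) : DifferentiableAt ℝ (a i) x := (hg i).exp.const_mul (ε i)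
  have hgK (i s : Fin n) : (K i x - K s x) * pd (g i) s x + pd (K i) s x = 0 := by
    obtain rfl | his := eq_or_ne i s
    · simp [hwnl]
    · exact hmetric i s his
  have haK (i s : Fin n) : (K i x - K s x) * pd (a i) s x + a i x * pd (K i) s x = 0 := by
    rw [pd_const_mul_exp (hg i)]
    linear_combination a i x * hgK i s
  calc
    _ = 1 / 2 * poisson (diagonalQuadratic a) (diagonalQuadratic fun i y => a i y * K i y) (x, p) :=
      poisson_const_mul_left _ (diagonalQuadratic a) _ _
    _ = 0 := by rw [poisson_diagonalQuadratic_mul_eq_zero ha hK haK, mul_zero]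

end PoissonBracket

theorem poisson_commute_of_conditions {n : ℕ} (U : Set (Fin n → ℝ)) (hU : IsOpen U)
    (g K : Fin n → (Fin n → ℝ) → ℝ)
    (hg : ∀ i, ContDiffOn ℝ (⊤ : ℕ∞) (g i) U) (hK : ∀ i, ContDiffOn ℝ (⊤ : ℕ∞) (K i) U)
    (ε : Fin n → ℝ) (hε : ∀ i, ε i = 1 ∨ ε i = -1)
    (hwnl : ∀ i : Fin n, ∀ x ∈ U, pd (K i) i x = 0)
    (hmetric : ∀ i j : Fin n, i ≠ j → ∀ x ∈ U,
      (K i x - K j x) * pd (g i) j x + pd (K i) j x = 0) :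
    ∀ x ∈ U, ∀ p : Fin n → ℝ,
      poisson
        (fun q => (1 / 2 : ℝ) * ∑ i, ε i * Real.exp (g i q.1) * (q.2 i) ^ 2)
        (fun q => ∑ i, ε i * Real.exp (g i q.1) * K i q.1 * (q.2 i) ^ 2) (x, p) = 0 :=
  fun _ hx => poisson_commute_of_conditions_general
    (fun i => ((hg i).contDiffAt (hU.mem_nhds hx)).differentiableAt (by simp))
    (fun i => ((hK i).contDiffAt (hU.mem_nhds hx)).differentiableAt (by simp))
    ε (hwnl · _ hx) (hmetric · · · _ hx)
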